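/- Let Δ be the F_4 root system with the partition Δ_long = Δ_sin1 ∪ Δ_sin2 ∪ Δ_sin3 as above, and let (x, y), (x′, y′) be two pairs of orthogonal long roots with R_{x,y} ⊂ Δ_sin_i and R_{x′,y′} ⊂ Δ_sin_j for i ≠ j. Then ξ := ⟨x, x′⟩⟨y, y′⟩⟨x, y′⟩⟨y, x′⟩ ≠ 0, and all roots contained in the set Q = R_{x,y} + R_{x′,y′} belong to Δ_sin_k where {k} = {1,2,3} ∖ {i,j}; moreover, if ξ > 0 then Q contains exactly four roots forming ±{x″, y″} with x″ ⊥ y″, and if ξ < 0 then Q contains all eight roots of Δ_sin_k. -/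

import Mathlib

/-!
Long roots from different classes `Δ_sin` have inner product `±1`; their sum is a root exactly when
it is `-1`, and then lies in the third class. All the claims follow from this by sign arguments.

If `ξ < 0` and `z` is in the third class, the four numbers `⟨z, a⟩⟨z, b⟩⟨a, b⟩` with `a ∈ {x, y}`
and `b ∈ {x′, y′}` are `±1` and their product is `ξ`, up to squares. So one of them is `-1`, which
forces `‖z - ⟨z, a⟩a - ⟨z, b⟩b‖² = 0` and puts `z` in `Q`.

If `ξ > 0`, changing signs of `x, y, x′, y′`, which does not affect `Q`, makes all four cross inner
products `-1`. Then `‖x + y + x′ + y′‖² = 0`, so `x + x′ = -(y + y′)` and `x + y′ = -(y + x′)` are,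
up to sign, the only roots in `Q`, and they are orthogonal.
-/

open scoped RealInnerProductSpace

/-- The standard basis vector `e_i` of `ℝ⁴`. -/
noncomputable def e (i : Fin 4) : EuclideanSpace ℝ (Fin 4) :=
  EuclideanSpace.single i 1

/-- The set `{±e_i ± e_j}` for fixed `i, j`. -/
def pmSet (i j : Fin 4) : Set (EuclideanSpace ℝ (Fin 4)) :=
  {v | ∃ ε δ : ℝ, (ε = 1 ∨ ε = -1) ∧ (δ = 1 ∨ δ = -1) ∧ v = ε • e i + δ • e j}

/-- Long roots of `F₄`: `±e_i ± e_j`, `i < j`. -/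
def LongF4 : Set (EuclideanSpace ℝ (Fin 4)) :=
  {v | ∃ i j : Fin 4, i < j ∧ v ∈ pmSet i j}

/-- Short roots of `F₄`: `±e_i` together with `(1/2)(±e₁ ± e₂ ± e₃ ± e₄)`. -/
def ShF4 : Set (EuclideanSpace ℝ (Fin 4)) :=
  {v | ∃ i : Fin 4, v = e i ∨ v = -e i} ∪
  {v | ∃ ε : Fin 4 → ℝ, (∀ i, ε i = 1 ∨ ε i = -1) ∧ v = (1 / 2 : ℝ) • ∑ i, ε i • e i}

/-- The root system `F₄`. -/
def ΔF4 : Set (EuclideanSpace ℝ (Fin 4)) := LongF4 ∪ ShF4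

/-- The partition of the long roots of `F₄`:
`Δ_sin1 = {±e₁±e₂, ±e₃±e₄}`, `Δ_sin2 = {±e₁±e₄, ±e₂±e₃}`, `Δ_sin3 = {±e₁±e₃, ±e₂±e₄}`. -/
def sinF4 : Fin 3 → Set (EuclideanSpace ℝ (Fin 4)) :=
  ![pmSet 0 1 ∪ pmSet 2 3, pmSet 0 3 ∪ pmSet 1 2, pmSet 0 2 ∪ pmSet 1 3]

/-- `R_{x,y} = {±x, ±y}`. -/
def Rset (x y : EuclideanSpace ℝ (Fin 4)) : Set (EuclideanSpace ℝ (Fin 4)) :=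
  {x, -x, y, -y}

/-- `Q = R_{x,y} + R_{x′,y′}`. -/
def Qset (x y x' y' : EuclideanSpace ℝ (Fin 4)) : Set (EuclideanSpace ℝ (Fin 4)) :=
  {v | ∃ a ∈ Rset x y, ∃ b ∈ Rset x' y', v = a + b}

section InnerProductSpace

variable {E : Type*} [NormedAddCommGroup E] [InnerProductSpace ℝ E]

theorem eq_smul_add_smul_of_inner_mul_eq_neg_one {z a b : E} (hz : ⟪z, z⟫ = 2) (ha : ⟪a, a⟫ = 2)
    (hb : ⟪b, b⟫ = 2) (h : ⟪z, a⟫ * ⟪z, b⟫ * ⟪a, b⟫ = -1) : z = ⟪z, a⟫ • a + ⟪z, b⟫ • b := by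
  rw [← sub_eq_zero, ← inner_self_eq_zero (𝕜 := ℝ)]
  simp only [inner_sub_left, inner_sub_right, inner_add_left, inner_add_right,
    real_inner_smul_left, real_inner_smul_right, real_inner_comm z a, real_inner_comm z b,
    real_inner_comm a b, hz, ha, hb]
  linear_combination 2 * h

theorem add_add_add_eq_zero_of_inner_eq_neg_one {x y x' y' : E} (hx : ⟪x, x⟫ = 2)
    (hy : ⟪y, y⟫ = 2) (hx' : ⟪x', x'⟫ = 2) (hy' : ⟪y', y'⟫ = 2) (hxy : ⟪x, y⟫ = 0)
    (hx'y' : ⟪x', y'⟫ = 0) (hxx' : ⟪x, x'⟫ = -1) (hxy' : ⟪x, y'⟫ = -1) (hyx' : ⟪y, x'⟫ = -1)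
    (hyy' : ⟪y, y'⟫ = -1) : x + x' + (y + y') = 0 := by
  rw [← inner_self_eq_zero (𝕜 := ℝ)]
  simp only [inner_add_left, inner_add_right, real_inner_comm x y, real_inner_comm x x',
    real_inner_comm x y', real_inner_comm y x', real_inner_comm y y', real_inner_comm x' y',
    hx, hy, hx', hy', hxy, hx'y', hxx', hxy', hyx', hyy']
  norm_num

theorem exists_smul_inner_eq_neg_one {x y x' y' : E} (hxx' : ⟪x, x'⟫ ^ 2 = 1)
    (hyy' : ⟪y, y'⟫ ^ 2 = 1) (hxy' : ⟪x, y'⟫ ^ 2 = 1) (hyx' : ⟪y, x'⟫ ^ 2 = 1)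
    (hξ : 0 < ⟪x, x'⟫ * ⟪y, y'⟫ * ⟪x, y'⟫ * ⟪y, x'⟫) :
    ∃ c d c' d' : ℝ, c ^ 2 = 1 ∧ d ^ 2 = 1 ∧ c' ^ 2 = 1 ∧ d' ^ 2 = 1 ∧
      ⟪c • x, c' • x'⟫ = -1 ∧ ⟪c • x, d' • y'⟫ = -1 ∧
      ⟪d • y, c' • x'⟫ = -1 ∧ ⟪d • y, d' • y'⟫ = -1 := by
  have hξ_sq : (⟪x, x'⟫ * ⟪y, y'⟫ * ⟪x, y'⟫ * ⟪y, x'⟫) ^ 2 = 1 := by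
    simp only [mul_pow, hxx', hyy', hxy', hyx', one_mul]
  have hξ_one : ⟪x, x'⟫ * ⟪y, y'⟫ * ⟪x, y'⟫ * ⟪y, x'⟫ = 1 :=
    (sq_eq_one_iff.1 hξ_sq).resolve_right (by linarith)
  refine ⟨1, ⟪x, x'⟫ * ⟪y, x'⟫, -⟪x, x'⟫, -⟪x, y'⟫, one_pow 2, ?_, ?_, ?_, ?_⟩
  · rw [mul_pow, hxx', hyx', one_mul]
  · rw [neg_sq, hxx']
  · rw [neg_sq, hxy']
  · simp only [real_inner_smul_left, real_inner_smul_right]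
    refine ⟨?_, ?_, ?_, ?_⟩
    · linear_combination -hxx'
    · linear_combination -hxy'
    · linear_combination -⟪y, x'⟫ ^ 2 * hxx' - hyx'
    · linear_combination -hξ_one

theorem ne_and_ne_neg_of_inner_eq_zero {v w : E} (hw : w ≠ 0) (h : ⟪v, w⟫ = 0) :
    v ≠ w ∧ v ≠ -w := by
  constructor <;> rintro rfl <;> simp [hw] at h

end InnerProductSpace

variable {a b v x y x' y' : EuclideanSpace ℝ (Fin 4)}

theorem orthonormal_e : Orthonormal ℝ e :=
  EuclideanSpace.orthonormal_single

theorem inner_e (p q : Fin 4) : ⟪e p, e q⟫ = if p = q then 1 else 0 :=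
  orthonormal_iff_ite.1 orthonormal_e p q

section pmSet

variable {p q r : Fin 4}

theorem pmSet_comm (p q : Fin 4) : pmSet p q = pmSet q p := by
  ext v
  constructor <;>
  · rintro ⟨ε, δ, hε, hδ, rfl⟩
    exact ⟨δ, ε, hδ, hε, add_comm _ _⟩

theorem inner_self_of_mem_pmSet (hpq : p ≠ q) (hv : v ∈ pmSet p q) : ⟪v, v⟫ = 2 := by
  obtain ⟨ε, δ, hε, hδ, rfl⟩ := hv
  simp only [inner_add_left, inner_add_right, real_inner_smul_left, real_inner_smul_right,
    inner_e, hpq, hpq.symm, if_true, if_false]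
  linear_combination sq_eq_one_iff.2 hε + sq_eq_one_iff.2 hδ

theorem inner_smul_e_add_smul_e (hpq : p ≠ q) (hpr : p ≠ r) (hqr : q ≠ r) (ε δ ε' δ' : ℝ) :
    ⟪ε • e p + δ • e q, ε' • e p + δ' • e r⟫ = ε * ε' := by
  simp only [inner_add_left, inner_add_right, real_inner_smul_left, real_inner_smul_right,
    inner_e, hpq.symm, hpr, hqr, if_true, if_false]
  ring

theorem inner_sq_of_mem_pmSet (hpq : p ≠ q) (hpr : p ≠ r) (hqr : q ≠ r) (ha : a ∈ pmSet p q)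
    (hb : b ∈ pmSet p r) : ⟪a, b⟫ ^ 2 = 1 := by
  obtain ⟨ε, δ, hε, -, rfl⟩ := ha
  obtain ⟨ε', δ', hε', -, rfl⟩ := hb
  rw [inner_smul_e_add_smul_e hpq hpr hqr, mul_pow, sq_eq_one_iff.2 hε, sq_eq_one_iff.2 hε',
    one_mul]

theorem add_mem_pmSet (hpq : p ≠ q) (hpr : p ≠ r) (hqr : q ≠ r) (ha : a ∈ pmSet p q)
    (hb : b ∈ pmSet p r) (hab : ⟪a, b⟫ = -1) : a + b ∈ pmSet q r := by
  obtain ⟨ε, δ, hε, hδ, rfl⟩ := ha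
  obtain ⟨ε', δ', -, hδ', rfl⟩ := hb
  rw [inner_smul_e_add_smul_e hpq hpr hqr] at hab
  have hcancel : ε + ε' = 0 := by
    linear_combination ε * hab - ε' * sq_eq_one_iff.2 hε
  refine ⟨δ, δ', hδ, hδ', ?_⟩
  linear_combination (norm := module) hcancel • e p

end pmSet

theorem inner_self_of_mem_LongF4 (hv : v ∈ LongF4) : ⟪v, v⟫ = 2 := by
  obtain ⟨p, q, hpq, hv⟩ := hv
  exact inner_self_of_mem_pmSet hpq.ne hv

theorem inner_self_of_mem_ShF4 (hv : v ∈ ShF4) : ⟪v, v⟫ = 1 := by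
  rcases hv with ⟨p, rfl | rfl⟩ | ⟨ε, hε, rfl⟩
  · rw [inner_e, if_pos rfl]
  · rw [inner_neg_neg, inner_e, if_pos rfl]
  · have hsq (p : Fin 4) : ε p * ε p = 1 := by rw [← sq, sq_eq_one_iff.2 (hε p)]
    rw [real_inner_smul_left, real_inner_smul_right, orthonormal_e.inner_sum]
    simp only [conj_trivial, hsq, Finset.sum_const, Finset.card_univ, Fintype.card_fin]
    norm_num

theorem inner_self_le_of_mem_ΔF4 (hv : v ∈ ΔF4) : ⟪v, v⟫ ≤ 2 := by
  rcases hv with hv | hv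
  · exact (inner_self_of_mem_LongF4 hv).le
  · exact (inner_self_of_mem_ShF4 hv).trans_le one_le_two

/-- The index paired with a given one in the splitting of the coordinates into two pairs that
defines `sinF4 k`. The three maps `partner k` are the nontrivial elements of the Klein four-group
acting on the coordinates. -/
def partner : Fin 3 → Fin 4 → Fin 4 :=
  ![![1, 0, 3, 2], ![3, 2, 1, 0], ![2, 3, 0, 1]]

theorem partner_partner : ∀ k p, partner k (partner k p) = p := by decide

theorem ne_partner : ∀ k p, p ≠ partner k p := by decide

theorem partner_ne_partner : ∀ {i j : Fin 3}, i ≠ j → ∀ p, partner i p ≠ partner j p := by decide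

theorem partner_partner_of_ne : ∀ {i j k : Fin 3}, i ≠ j → k ≠ i → k ≠ j →
    ∀ p, partner k (partner i p) = partner j p := by decide

theorem exists_ne_and_ne : ∀ i j : Fin 3, ∃ k, k ≠ i ∧ k ≠ j := by decide

theorem mem_pair_partner_of_ne : ∀ {i j : Fin 3}, i ≠ j → ∀ p r,
    (p = r ∨ p = partner j r) ∨ (partner i p = r ∨ partner i p = partner j r) := by decide

section sinF4

variable {i j k : Fin 3}

theorem mem_sinF4_iff : v ∈ sinF4 k ↔ ∃ p, v ∈ pmSet p (partner k p) := by
  constructor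
  · intro hv
    fin_cases k <;> rcases hv with hv | hv
    exacts [⟨0, hv⟩, ⟨2, hv⟩, ⟨0, hv⟩, ⟨1, hv⟩, ⟨0, hv⟩, ⟨1, hv⟩]
  · rintro ⟨p, hv⟩
    have hv' := pmSet_comm p (partner k p) ▸ hv
    fin_cases k <;> fin_cases p <;> first
      | exact Or.inl hv
      | exact Or.inr hv
      | exact Or.inl hv'
      | exact Or.inr hv'

theorem pmSet_partner_partner (k : Fin 3) (p : Fin 4) :
    pmSet (partner k p) (partner k (partner k p)) = pmSet p (partner k p) := by
  rw [partner_partner, pmSet_comm]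

theorem exists_mem_pmSet_of_mem_sinF4 (hij : i ≠ j) (ha : a ∈ sinF4 i) (hb : b ∈ sinF4 j) :
    ∃ p, a ∈ pmSet p (partner i p) ∧ b ∈ pmSet p (partner j p) := by
  obtain ⟨p, hp⟩ := mem_sinF4_iff.1 ha
  obtain ⟨r, hr⟩ := mem_sinF4_iff.1 hb
  have hp' := (pmSet_partner_partner i p).symm ▸ hp
  have hr' := (pmSet_partner_partner j r).symm ▸ hr
  rcases mem_pair_partner_of_ne hij p r with (h | h) | (h | h)
  · exact ⟨p, hp, h ▸ hr⟩
  · exact ⟨p, hp, h ▸ hr'⟩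
  · exact ⟨_, hp', h ▸ hr⟩
  · exact ⟨_, hp', h ▸ hr'⟩

theorem sinF4_subset_LongF4 (k : Fin 3) : sinF4 k ⊆ LongF4 := by
  intro v hv
  fin_cases k <;> rcases hv with hv | hv <;> exact ⟨_, _, by decide, hv⟩

theorem sinF4_subset_ΔF4 (k : Fin 3) : sinF4 k ⊆ ΔF4 :=
  (sinF4_subset_LongF4 k).trans Set.subset_union_left

theorem inner_self_of_mem_sinF4 (hv : v ∈ sinF4 k) : ⟪v, v⟫ = 2 :=
  inner_self_of_mem_LongF4 (sinF4_subset_LongF4 k hv)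

theorem inner_sq_of_mem_sinF4 (hij : i ≠ j) (ha : a ∈ sinF4 i) (hb : b ∈ sinF4 j) :
    ⟪a, b⟫ ^ 2 = 1 := by
  obtain ⟨p, ha, hb⟩ := exists_mem_pmSet_of_mem_sinF4 hij ha hb
  exact inner_sq_of_mem_pmSet (ne_partner i p) (ne_partner j p) (partner_ne_partner hij p) ha hb

theorem inner_ne_zero_of_mem_sinF4 (hij : i ≠ j) (ha : a ∈ sinF4 i) (hb : b ∈ sinF4 j) :
    ⟪a, b⟫ ≠ 0 := by
  intro h
  simpa [h] using inner_sq_of_mem_sinF4 hij ha hb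

theorem add_mem_sinF4 (hij : i ≠ j) (hki : k ≠ i) (hkj : k ≠ j) (ha : a ∈ sinF4 i)
    (hb : b ∈ sinF4 j) (hab : ⟪a, b⟫ = -1) : a + b ∈ sinF4 k := by
  obtain ⟨p, ha, hb⟩ := exists_mem_pmSet_of_mem_sinF4 hij ha hb
  refine mem_sinF4_iff.2 ⟨partner i p, ?_⟩
  rw [partner_partner_of_ne hij hki hkj]
  exact add_mem_pmSet (ne_partner i p) (ne_partner j p) (partner_ne_partner hij p) ha hb hab

theorem add_mem_ΔF4_iff (hij : i ≠ j) (ha : a ∈ sinF4 i) (hb : b ∈ sinF4 j) :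
    a + b ∈ ΔF4 ↔ ⟪a, b⟫ = -1 := by
  constructor
  · intro hab
    have hle := inner_self_le_of_mem_ΔF4 hab
    rw [real_inner_add_add_self, inner_self_of_mem_sinF4 ha, inner_self_of_mem_sinF4 hb] at hle
    refine (sq_eq_one_iff.1 (inner_sq_of_mem_sinF4 hij ha hb)).resolve_left ?_
    linarith
  · intro hab
    obtain ⟨k, hki, hkj⟩ := exists_ne_and_ne i j
    exact sinF4_subset_ΔF4 k (add_mem_sinF4 hij hki hkj ha hb hab)

end sinF4

section Rset

variable {c d : ℝ}

theorem left_mem_Rset (x y : EuclideanSpace ℝ (Fin 4)) : x ∈ Rset x y := by simp [Rset]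

theorem right_mem_Rset (x y : EuclideanSpace ℝ (Fin 4)) : y ∈ Rset x y := by simp [Rset]

theorem mem_Rset_iff : v ∈ Rset x y ↔ ∃ c : ℝ, c ^ 2 = 1 ∧ (v = c • x ∨ v = c • y) := by
  simp only [Rset, Set.mem_insert_iff, Set.mem_singleton_iff, sq_eq_one_iff, or_and_right,
    exists_or, exists_eq_left, one_smul, neg_one_smul]
  tauto

theorem smul_mem_Rset (hc : c ^ 2 = 1) (hv : v ∈ Rset x y) : c • v ∈ Rset x y := by
  obtain ⟨d, hd, hv⟩ := mem_Rset_iff.1 hv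
  refine mem_Rset_iff.2 ⟨c * d, by rw [mul_pow, hc, hd, one_mul], ?_⟩
  simpa only [mul_smul] using hv.imp (congrArg (c • ·)) (congrArg (c • ·))

theorem Rset_smul_smul (hc : c ^ 2 = 1) (hd : d ^ 2 = 1) (x y : EuclideanSpace ℝ (Fin 4)) :
    Rset (c • x) (d • y) = Rset x y := by
  rcases sq_eq_one_iff.1 hc with rfl | rfl <;> rcases sq_eq_one_iff.1 hd with rfl | rfl <;>
    simp [Rset, Set.insert_comm, Set.pair_comm]

end Rset

section Qset

variable {i j k : Fin 3}

theorem Qset_smul_smul {c d c' d' : ℝ} (hc : c ^ 2 = 1) (hd : d ^ 2 = 1) (hc' : c' ^ 2 = 1)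
    (hd' : d' ^ 2 = 1) (x y x' y' : EuclideanSpace ℝ (Fin 4)) :
    Qset (c • x) (d • y) (c' • x') (d' • y') = Qset x y x' y' := by
  rw [Qset, Rset_smul_smul hc hd, Rset_smul_smul hc' hd', Qset]

theorem mem_Qset_of_inner_mul_neg (hij : i ≠ j) (hki : k ≠ i) (hkj : k ≠ j)
    (hRi : Rset x y ⊆ sinF4 i) (hRj : Rset x' y' ⊆ sinF4 j) (hv : v ∈ sinF4 k)
    (ha : a ∈ Rset x y) (hb : b ∈ Rset x' y') (h : ⟪v, a⟫ * ⟪v, b⟫ * ⟪a, b⟫ < 0) :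
    v ∈ Qset x y x' y' := by
  have hva := inner_sq_of_mem_sinF4 hki hv (hRi ha)
  have hvb := inner_sq_of_mem_sinF4 hkj hv (hRj hb)
  have hab := inner_sq_of_mem_sinF4 hij (hRi ha) (hRj hb)
  have hsq : (⟪v, a⟫ * ⟪v, b⟫ * ⟪a, b⟫) ^ 2 = 1 := by
    rw [mul_pow, mul_pow, hva, hvb, hab, one_mul, one_mul]
  have hneg_one : ⟪v, a⟫ * ⟪v, b⟫ * ⟪a, b⟫ = -1 :=
    (sq_eq_one_iff.1 hsq).resolve_left (by linarith)
  exact ⟨_, smul_mem_Rset hva ha, _, smul_mem_Rset hvb hb,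
    eq_smul_add_smul_of_inner_mul_eq_neg_one (inner_self_of_mem_sinF4 hv)
      (inner_self_of_mem_sinF4 (hRi ha)) (inner_self_of_mem_sinF4 (hRj hb)) hneg_one⟩

theorem sinF4_subset_Qset_of_neg (hij : i ≠ j) (hki : k ≠ i) (hkj : k ≠ j)
    (hRi : Rset x y ⊆ sinF4 i) (hRj : Rset x' y' ⊆ sinF4 j)
    (hξ : ⟪x, x'⟫ * ⟪y, y'⟫ * ⟪x, y'⟫ * ⟪y, x'⟫ < 0) : sinF4 k ⊆ Qset x y x' y' := by
  intro z hz
  by_contra hzQ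
  have hnonneg {a b} (ha : a ∈ Rset x y) (hb : b ∈ Rset x' y') :
      0 ≤ ⟪z, a⟫ * ⟪z, b⟫ * ⟪a, b⟫ :=
    not_lt.1 fun h => hzQ (mem_Qset_of_inner_mul_neg hij hki hkj hRi hRj hz ha hb h)
  have hx := left_mem_Rset x y
  have hy := right_mem_Rset x y
  have hx' := left_mem_Rset x' y'
  have hy' := right_mem_Rset x' y'
  refine hξ.not_ge ?_
  calc
    0 ≤ (⟪z, x⟫ * ⟪z, x'⟫ * ⟪x, x'⟫) * (⟪z, y⟫ * ⟪z, y'⟫ * ⟪y, y'⟫) *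
        (⟪z, x⟫ * ⟪z, y'⟫ * ⟪x, y'⟫) * (⟪z, y⟫ * ⟪z, x'⟫ * ⟪y, x'⟫) :=
      mul_nonneg (mul_nonneg (mul_nonneg (hnonneg hx hx') (hnonneg hy hy')) (hnonneg hx hy'))
        (hnonneg hy hx')
    _ = ⟪z, x⟫ ^ 2 * ⟪z, y⟫ ^ 2 * ⟪z, x'⟫ ^ 2 * ⟪z, y'⟫ ^ 2 *
        (⟪x, x'⟫ * ⟪y, y'⟫ * ⟪x, y'⟫ * ⟪y, x'⟫) := by ring
    _ = ⟪x, x'⟫ * ⟪y, y'⟫ * ⟪x, y'⟫ * ⟪y, x'⟫ := by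
      rw [inner_sq_of_mem_sinF4 hki hz (hRi hx), inner_sq_of_mem_sinF4 hki hz (hRi hy),
        inner_sq_of_mem_sinF4 hkj hz (hRj hx'), inner_sq_of_mem_sinF4 hkj hz (hRj hy')]
      ring

theorem mem_sinF4_of_mem_Qset (hij : i ≠ j) (hki : k ≠ i) (hkj : k ≠ j)
    (hRi : Rset x y ⊆ sinF4 i) (hRj : Rset x' y' ⊆ sinF4 j) (hv : v ∈ Qset x y x' y')
    (hvΔ : v ∈ ΔF4) : v ∈ sinF4 k := by
  obtain ⟨a, ha, b, hb, rfl⟩ := hv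
  exact add_mem_sinF4 hij hki hkj (hRi ha) (hRj hb)
    ((add_mem_ΔF4_iff hij (hRi ha) (hRj hb)).1 hvΔ)

theorem Qset_inter_ΔF4_of_inner_eq_neg_one (hij : i ≠ j) (hRi : Rset x y ⊆ sinF4 i)
    (hRj : Rset x' y' ⊆ sinF4 j) (hsum : x + x' + (y + y') = 0) (hxx' : ⟪x, x'⟫ = -1)
    (hxy' : ⟪x, y'⟫ = -1) (hyx' : ⟪y, x'⟫ = -1) (hyy' : ⟪y, y'⟫ = -1) :
    Qset x y x' y' ∩ ΔF4 = Rset (x + x') (x + y') := by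
  have hyx'_eq : y + x' = (-1 : ℝ) • (x + y') := by
    linear_combination (norm := module) hsum
  have hyy'_eq : y + y' = (-1 : ℝ) • (x + x') := by
    linear_combination (norm := module) hsum
  have hneg : (-1 : ℝ) ^ 2 = 1 := by norm_num
  ext z
  constructor
  · rintro ⟨⟨a, ha, b, hb, rfl⟩, hz⟩
    have hab := (add_mem_ΔF4_iff hij (hRi ha) (hRj hb)).1 hz
    obtain ⟨c, hc, ha⟩ := mem_Rset_iff.1 ha
    obtain ⟨d, -, hb⟩ := mem_Rset_iff.1 hb
    have hcd : c * d = 1 := by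
      rcases ha with rfl | rfl <;> rcases hb with rfl | rfl <;>
        simp only [real_inner_smul_left, real_inner_smul_right, hxx', hxy', hyx', hyy'] at hab <;>
        linarith
    obtain rfl : d = c := by linear_combination c * hcd - d * hc
    rcases ha with rfl | rfl <;> rcases hb with rfl | rfl <;> rw [← smul_add] <;>
      refine smul_mem_Rset hc ?_
    · exact left_mem_Rset ..
    · exact right_mem_Rset ..
    · exact hyx'_eq ▸ smul_mem_Rset hneg (right_mem_Rset ..)
    · exact hyy'_eq ▸ smul_mem_Rset hneg (left_mem_Rset ..)
  · have hroot {c : ℝ} (hc : c ^ 2 = 1) {b} (hb : b ∈ Rset x' y') (hxb : ⟪x, b⟫ = -1) :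
        c • (x + b) ∈ Qset x y x' y' ∩ ΔF4 := by
      have ha' := smul_mem_Rset hc (left_mem_Rset x y)
      have hb' := smul_mem_Rset hc hb
      rw [smul_add]
      refine ⟨⟨_, ha', _, hb', rfl⟩, (add_mem_ΔF4_iff hij (hRi ha') (hRj hb')).2 ?_⟩
      rw [real_inner_smul_left, real_inner_smul_right, hxb]
      linear_combination -hc
    intro hz
    obtain ⟨c, hc, rfl | rfl⟩ := mem_Rset_iff.1 hz
    · exact hroot hc (left_mem_Rset ..) hxx'
    · exact hroot hc (right_mem_Rset ..) hxy'

theorem exists_Qset_inter_ΔF4_eq_Rset_of_inner_eq_neg_one (hij : i ≠ j)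
    (hRi : Rset x y ⊆ sinF4 i) (hRj : Rset x' y' ⊆ sinF4 j) (hxy : ⟪x, y⟫ = 0)
    (hx'y' : ⟪x', y'⟫ = 0) (hxx' : ⟪x, x'⟫ = -1) (hxy' : ⟪x, y'⟫ = -1) (hyx' : ⟪y, x'⟫ = -1)
    (hyy' : ⟪y, y'⟫ = -1) :
    ∃ x'' y'' : EuclideanSpace ℝ (Fin 4), x'' ∈ ΔF4 ∧ y'' ∈ ΔF4 ∧
      ⟪x'', y''⟫ = 0 ∧ x'' ≠ y'' ∧ x'' ≠ -y'' ∧ Qset x y x' y' ∩ ΔF4 = Rset x'' y'' := by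
  have hx := inner_self_of_mem_sinF4 (hRi (left_mem_Rset x y))
  have hy := inner_self_of_mem_sinF4 (hRi (right_mem_Rset x y))
  have hx' := inner_self_of_mem_sinF4 (hRj (left_mem_Rset x' y'))
  have hy' := inner_self_of_mem_sinF4 (hRj (right_mem_Rset x' y'))
  have hroots := Qset_inter_ΔF4_of_inner_eq_neg_one hij hRi hRj
    (add_add_add_eq_zero_of_inner_eq_neg_one hx hy hx' hy' hxy hx'y' hxx' hxy' hyx' hyy')
    hxx' hxy' hyx' hyy'
  have hΔ : Rset (x + x') (x + y') ⊆ ΔF4 := hroots ▸ Set.inter_subset_right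
  have hort : ⟪x + x', x + y'⟫ = 0 := by
    rw [inner_add_left, inner_add_right, inner_add_right, real_inner_comm x x', hx, hxx', hxy',
      hx'y']
    norm_num
  have hne : x + y' ≠ 0 := by
    intro h
    have hinner : ⟪x, x + y'⟫ = 1 := by rw [inner_add_right, hx, hxy']; norm_num
    simp [h] at hinner
  obtain ⟨hne_left, hne_neg⟩ := ne_and_ne_neg_of_inner_eq_zero hne hort
  exact ⟨_, _, hΔ (left_mem_Rset ..), hΔ (right_mem_Rset ..), hort, hne_left, hne_neg, hroots⟩

theorem exists_Qset_inter_ΔF4_eq_Rset_of_pos (hij : i ≠ j) (hRi : Rset x y ⊆ sinF4 i)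
    (hRj : Rset x' y' ⊆ sinF4 j) (hxy : ⟪x, y⟫ = 0) (hx'y' : ⟪x', y'⟫ = 0)
    (hξ : 0 < ⟪x, x'⟫ * ⟪y, y'⟫ * ⟪x, y'⟫ * ⟪y, x'⟫) :
    ∃ x'' y'' : EuclideanSpace ℝ (Fin 4), x'' ∈ ΔF4 ∧ y'' ∈ ΔF4 ∧
      ⟪x'', y''⟫ = 0 ∧ x'' ≠ y'' ∧ x'' ≠ -y'' ∧ Qset x y x' y' ∩ ΔF4 = Rset x'' y'' := by
  have hsq {a b} (ha : a ∈ Rset x y) (hb : b ∈ Rset x' y') : ⟪a, b⟫ ^ 2 = 1 :=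
    inner_sq_of_mem_sinF4 hij (hRi ha) (hRj hb)
  obtain ⟨c, d, c', d', hc, hd, hc', hd', hxx', hxy', hyx', hyy'⟩ :=
    exists_smul_inner_eq_neg_one (hsq (left_mem_Rset ..) (left_mem_Rset ..))
      (hsq (right_mem_Rset ..) (right_mem_Rset ..)) (hsq (left_mem_Rset ..) (right_mem_Rset ..))
      (hsq (right_mem_Rset ..) (left_mem_Rset ..)) hξ
  rw [← Rset_smul_smul hc hd] at hRi
  rw [← Rset_smul_smul hc' hd'] at hRj
  rw [← Qset_smul_smul hc hd hc' hd']
  refine exists_Qset_inter_ΔF4_eq_Rset_of_inner_eq_neg_one hij hRi hRj ?_ ?_ hxx' hxy' hyx' hyy'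
  · rw [real_inner_smul_left, real_inner_smul_right, hxy, mul_zero, mul_zero]
  · rw [real_inner_smul_left, real_inner_smul_right, hx'y', mul_zero, mul_zero]

end Qset

/-- for two orthogonal pairs of long roots of `F₄` with
`R_{x,y} ⊂ Δ_sin_i`, `R_{x′,y′} ⊂ Δ_sin_j`, `i ≠ j`:
`ξ = ⟨x,x′⟩⟨y,y′⟩⟨x,y′⟩⟨y,x′⟩ ≠ 0`; every root in `Q = R_{x,y} + R_{x′,y′}` lies in
`Δ_sin_k` (`{k} = {1,2,3} ∖ {i,j}`); if `ξ > 0` then the roots in `Q` are exactly four,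
forming `±{x″, y″}` with `x″ ⊥ y″`; if `ξ < 0` then `Q` contains all eight roots of
`Δ_sin_k`. -/
theorem Q_roots_F4 (x y x' y' : EuclideanSpace ℝ (Fin 4))
    (hx : x ∈ LongF4) (hy : y ∈ LongF4) (hx' : x' ∈ LongF4) (hy' : y' ∈ LongF4)
    (hxy : ⟪x, y⟫ = 0) (hx'y' : ⟪x', y'⟫ = 0)
    (i j k : Fin 3) (hij : i ≠ j) (hki : k ≠ i) (hkj : k ≠ j)
    (hRi : Rset x y ⊆ sinF4 i) (hRj : Rset x' y' ⊆ sinF4 j) :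
    (⟪x, x'⟫ * ⟪y, y'⟫ * ⟪x, y'⟫ * ⟪y, x'⟫ ≠ 0) ∧
    (∀ z ∈ Qset x y x' y', z ∈ ΔF4 → z ∈ sinF4 k) ∧
    (0 < ⟪x, x'⟫ * ⟪y, y'⟫ * ⟪x, y'⟫ * ⟪y, x'⟫ →
      ∃ x'' y'' : EuclideanSpace ℝ (Fin 4), x'' ∈ ΔF4 ∧ y'' ∈ ΔF4 ∧
        ⟪x'', y''⟫ = 0 ∧ x'' ≠ y'' ∧ x'' ≠ -y'' ∧
        {z | z ∈ Qset x y x' y' ∧ z ∈ ΔF4} = Rset x'' y'') ∧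
    (⟪x, x'⟫ * ⟪y, y'⟫ * ⟪x, y'⟫ * ⟪y, x'⟫ < 0 →
      sinF4 k ⊆ Qset x y x' y') := by
  have hinner {a b} (ha : a ∈ Rset x y) (hb : b ∈ Rset x' y') : ⟪a, b⟫ ≠ 0 :=
    inner_ne_zero_of_mem_sinF4 hij (hRi ha) (hRj hb)
  refine ⟨?_, fun z hzQ hz => ?_, fun hξ => ?_, fun hξ => ?_⟩
  · have hx := left_mem_Rset x y
    have hy := right_mem_Rset x y
    have hx' := left_mem_Rset x' y'
    have hy' := right_mem_Rset x' y'
    exact mul_ne_zero (mul_ne_zero (mul_ne_zero (hinner hx hx') (hinner hy hy'))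
      (hinner hx hy')) (hinner hy hx')
  · exact mem_sinF4_of_mem_Qset hij hki hkj hRi hRj hzQ hz
  · exact exists_Qset_inter_ΔF4_eq_Rset_of_pos hij hRi hRj hxy hx'y' hξ
  · exact sinF4_subset_Qset_of_neg hij hki hkj hRi hRj hξ
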